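/- Let S = {s1, …, sk} be a set of pairwise matching strings of length n over Σ and D a nonnegative integer. There exists a string s* of length n over Σ with Σ_{i=1}^{k} ∂S(s_i, s*) ≤ D if and only if there exists a binary string h* of length n−1 with Σ_{i=1}^{k} ∂Ham(h_{s1,s_i}, h*) ≤ D. -/

import Mathlib

/-!
Strings of length `n` over an alphabet `α` are modelled as functions `ℕ → α`,
where only the values at positions `0, …, n-1` (0-indexed) are relevant.
A swap at (0-indexed) position `p` exchanges the letters at positions `p` and `p+1`.
A swap permutation is modelled as a `Finset ℕ` of swap positions, pairwise at
distance ≥ 2 (equivalently: containing no two consecutive positions).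
-/

universe u

variable {α : Type u}

/-- `P` is a swap permutation for strings of length `n`: every swap position is in range
and no two swaps overlap (positions are pairwise at distance ≥ 2). -/
def IsSwapSet (n : ℕ) (P : Finset ℕ) : Prop :=
  (∀ p ∈ P, p + 1 < n) ∧ (∀ p ∈ P, p + 1 ∉ P)

/-- Apply a set of pairwise disjoint swaps to a string. -/
def applySwaps (P : Finset ℕ) (s : ℕ → α) : ℕ → α := fun i =>
  if i ∈ P then s (i + 1)
  else if 0 < i ∧ i - 1 ∈ P then s (i - 1)
  else s i

/-- The swap permutation `P` transforms `s1` into `s2` (as length-`n` strings). -/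
def Transforms (n : ℕ) (P : Finset ℕ) (s1 s2 : ℕ → α) : Prop :=
  IsSwapSet n P ∧ ∀ i < n, applySwaps P s1 i = s2 i

/-- Two length-`n` strings are matching if some swap permutation transforms one
into the other. -/
def SwMatching (n : ℕ) (s1 s2 : ℕ → α) : Prop :=
  ∃ P : Finset ℕ, Transforms n P s1 s2

/-- `P` is a *valid* swap permutation transforming `s1` into `s2`:
it transforms `s1` into `s2` and never swaps two identical letters. -/
def ValidTransform (n : ℕ) (P : Finset ℕ) (s1 s2 : ℕ → α) : Prop :=
  Transforms n P s1 s2 ∧ ∀ p ∈ P, s1 p ≠ s1 (p + 1)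

/-- Hamming distance of two length-`n` strings. -/
noncomputable def hamDist {β : Type*} (n : ℕ) (s t : ℕ → β) : ℕ :=
  letI : DecidablePred (fun i => s i ≠ t i) := fun _ => Classical.propDecidable _
  ((Finset.range n).filter (fun i => s i ≠ t i)).card

/-- Swap distance: the number of swaps of the valid swap permutation transforming
`s1` into `s2` (unique when it exists), and `⊤` if the strings are not matching. -/
noncomputable def swapDist (n : ℕ) (s1 s2 : ℕ → α) : ℕ∞ :=
  sInf {m : ℕ∞ | ∃ P : Finset ℕ, ValidTransform n P s1 s2 ∧ m = (P.card : ℕ∞)}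

/-- Swap+Hamming distance: minimum over all length-`n` strings `t` of
`∂S(s1,t) + ∂Ham(t,s2)`. -/
noncomputable def shDist (n : ℕ) (s1 s2 : ℕ → α) : ℕ∞ :=
  ⨅ t : ℕ → α, swapDist n s1 t + (hamDist n t s2 : ℕ∞)

/-- Number of occurrences of the letter `x` at positions `a ≤ i < b` of the string `s`. -/
noncomputable def countIn {β : Type*} (s : ℕ → β) (a b : ℕ) (x : β) : ℕ :=
  letI : DecidablePred (fun i => s i = x) := fun _ => Classical.propDecidable _
  ((Finset.Ico a b).filter (fun i => s i = x)).card

/-- Greedy (left-to-right) swap set between two strings: position `p` is greedily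
swapped iff `s1[p] = s2[p+1]`, `s1[p+1] = s2[p]`, `s1[p] ≠ s1[p+1]`, and position
`p-1` was not swapped. -/
def greedyMem (s1 s2 : ℕ → α) : ℕ → Prop
  | 0 => s1 0 = s2 1 ∧ s1 1 = s2 0 ∧ s1 0 ≠ s1 1
  | p + 1 => (s1 (p + 1) = s2 (p + 2) ∧ s1 (p + 2) = s2 (p + 1) ∧ s1 (p + 1) ≠ s1 (p + 2))
      ∧ ¬ greedyMem s1 s2 p

/-- The greedy swap set `G(s1,s2)` restricted to the valid positions `0, …, n-2`. -/
noncomputable def greedySet (n : ℕ) (s1 s2 : ℕ → α) : Finset ℕ :=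
  letI : DecidablePred (greedyMem s1 s2) := fun _ => Classical.propDecidable _
  (Finset.range (n - 1)).filter (greedyMem s1 s2)

/-- `SW(S, t, i)`: the set of indices `j` such that `t` and `s j` have a greedy swap
at position `i`. -/
noncomputable def SW (n : ℕ) {k : ℕ} (s : Fin k → ℕ → α) (t : ℕ → α) (i : ℕ) :
    Finset (Fin k) :=
  letI : DecidablePred (fun j : Fin k => i ∈ greedySet n t (s j)) :=
    fun _ => Classical.propDecidable _
  Finset.univ.filter (fun j => i ∈ greedySet n t (s j))

/-- The swap `(p, p+1)` is necessary for the input string `s i` if every string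
matching all strings of `S` has a swap at position `p` in its valid swap
permutation towards `s i`. -/
def NecessarySwap (n : ℕ) {k : ℕ} (s : Fin k → ℕ → α) (i : Fin k) (p : ℕ) : Prop :=
  ∀ t : ℕ → α, (∀ j, SwMatching n t (s j)) →
    ∀ P : Finset ℕ, ValidTransform n P t (s i) → p ∈ P

/-- Lexicographic strict order on length-`n` strings. -/
def LexLt {β : Type*} [LinearOrder β] (n : ℕ) (s t : ℕ → β) : Prop :=
  ∃ i < n, s i < t i ∧ ∀ j < i, s j = t j

/-!
The letters of a prefix of a string change under disjoint swaps only if some swap crosses the end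
of the prefix. Hence the prefixes detect the valid swap permutation, which is therefore unique;
moreover, if `s` is transformed into matching strings `t` and `u`, then a swap towards `t`
overlapping a swap towards `u` would force two overlapping swaps between `t` and `u`. So the swaps
of `π(s,t)` and `π(s,u)` are pairwise equal or disjoint, they commute, and `π(t,u)` is the symmetric
difference of the two: swap distance between `t` and `u` is Hamming distance between swap strings.

From a solution `s*` one reads off the swap string `h_{s1,s*}`. Conversely, restricting `h*` to
positions where some `h_{s1,s_i}` is nonzero does not increase the Hamming distances, and the
restriction is the swap string of a string obtained from `s1`.
-/

section

variable {n p : ℕ} {P Q : Finset ℕ} {s t u : ℕ → α}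

theorem IsSwapSet.mono (hQ : IsSwapSet n Q) (h : P ⊆ Q) : IsSwapSet n P :=
  ⟨fun p hp => hQ.1 p (h hp), fun p hp hp' => hQ.2 p (h hp) (h hp')⟩

theorem applySwaps_of_mem (s : ℕ → α) (hp : p ∈ P) : applySwaps P s p = s (p + 1) :=
  if_pos hp

theorem applySwaps_succ_of_mem (s : ℕ → α) (hp : p ∈ P) (hp' : p + 1 ∉ P) :
    applySwaps P s (p + 1) = s p := by
  simp [applySwaps, hp, hp']

theorem applySwaps_of_notMem (s : ℕ → α) (hp : p ∉ P) (hpred : ∀ q ∈ P, q + 1 ≠ p) :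
    applySwaps P s p = s p := by
  grind [applySwaps]

theorem IsSwapSet.applySwaps_congr (hP : IsSwapSet n P) (hst : ∀ i < n, s i = t i) :
    ∀ i < n, applySwaps P s i = applySwaps P t i := by
  intro i hi
  have hsucc : i ∈ P → i + 1 < n := hP.1 i
  grind [applySwaps]

theorem IsSwapSet.applySwaps_applySwaps (h : IsSwapSet n (P ∪ Q)) (s : ℕ → α) :
    applySwaps P (applySwaps Q s) = applySwaps (symmDiff P Q) s := by
  have hdisj : ∀ p, p ∈ P ∨ p ∈ Q → p + 1 ∉ P ∧ p + 1 ∉ Q := by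
    simpa using h.2
  funext i
  -- At most one swap of `P ∪ Q` meets position `i`; it cancels if it lies in both sets.
  cases i <;> grind [applySwaps, Finset.mem_symmDiff]

protected theorem Transforms.symmDiff (hP : Transforms n P s t) (hQ : Transforms n Q s u)
    (h : IsSwapSet n (P ∪ Q)) : Transforms n (symmDiff P Q) t u := by
  have hsub : symmDiff P Q ∪ P ⊆ P ∪ Q := by grind [Finset.mem_symmDiff]
  have hR : IsSwapSet n (symmDiff P Q) := h.mono (Finset.union_subset_left hsub)
  refine ⟨hR, fun i hi => ?_⟩
  calc applySwaps (symmDiff P Q) t i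
      = applySwaps (symmDiff P Q) (applySwaps P s) i :=
        (hR.applySwaps_congr hP.2 i hi).symm
    _ = applySwaps Q s i := by
        rw [(h.mono hsub).applySwaps_applySwaps, symmDiff_symmDiff_self']
    _ = u i := hQ.2 i hi

protected theorem ValidTransform.symmDiff (hP : ValidTransform n P s t)
    (hQ : ValidTransform n Q s u) (h : IsSwapSet n (P ∪ Q)) :
    ValidTransform n (symmDiff P Q) t u := by
  refine ⟨hP.1.symmDiff hQ.1 h, fun p hp => ?_⟩
  have hn : p + 1 < n := h.1 p (by grind [Finset.mem_symmDiff])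
  rw [← hP.1.2 p (by omega), ← hP.1.2 (p + 1) hn]
  rcases Finset.mem_symmDiff.1 hp with ⟨hpP, -⟩ | ⟨hpQ, hpP⟩
  · rw [applySwaps_of_mem s hpP, applySwaps_succ_of_mem s hpP (hP.1.1.2 p hpP)]
    exact (hP.2 p hpP).symm
  · have hpred : ∀ q ∈ P, q + 1 ≠ p := fun q hq hqp =>
      h.2 q (Finset.mem_union_left Q hq) (Finset.mem_union_right P (hqp ▸ hpQ))
    have hsucc : p + 1 ∉ P := fun hp' =>
      h.2 p (Finset.mem_union_right P hpQ) (Finset.mem_union_left Q hp')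
    rw [applySwaps_of_notMem s hpP hpred,
      applySwaps_of_notMem s hsucc fun q hq hqp => hpP (Nat.succ.inj hqp ▸ hq)]
    exact hQ.2 p hpQ

/-- The multiset of the letters at the first `m` positions of `s`, the invariant that locates the
swaps between two strings. -/
def initialLetters (s : ℕ → α) (m : ℕ) : Multiset α := (Multiset.range m).map s

theorem initialLetters_succ (s : ℕ → α) (m : ℕ) :
    initialLetters s (m + 1) = s m ::ₘ initialLetters s m := by
  simp [initialLetters]

theorem Transforms.initialLetters_eq (h : Transforms n P s t) {m : ℕ} (hm : m ≤ n)
    (hcross : ∀ p ∈ P, p + 1 ≠ m) : initialLetters t m = initialLetters s m := by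
  induction m using Nat.strong_induction_on with
  | _ m ih =>
    obtain _ | m := m
    · rfl
    have hmP : m ∉ P := fun hp => hcross m hp rfl
    by_cases hpred : ∃ p ∈ P, p + 1 = m
    · obtain ⟨p, hp, rfl⟩ := hpred
      have hprefix := ih p (by omega) (by omega) fun q hq hqp => h.1.2 q hq (hqp ▸ hp)
      simp only [initialLetters_succ, hprefix, ← h.2 p (by omega), ← h.2 (p + 1) (by omega),
        applySwaps_of_mem s hp, applySwaps_succ_of_mem s hp hmP]
      exact Multiset.cons_swap ..
    · have hpred : ∀ p ∈ P, p + 1 ≠ m := fun p hp hpm => hpred ⟨p, hp, hpm⟩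
      rw [initialLetters_succ, initialLetters_succ, ih m (by omega) (by omega) hpred,
        ← h.2 m (by omega), applySwaps_of_notMem s hmP hpred]

theorem Transforms.initialLetters_succ_of_mem (h : Transforms n P s t) (hp : p ∈ P) :
    initialLetters t (p + 1) = s (p + 1) ::ₘ initialLetters s p := by
  have hn : p + 1 < n := h.1.1 p hp
  have hprefix : initialLetters t p = initialLetters s p :=
    h.initialLetters_eq (by omega) fun q hq hqp => h.1.2 q hq (hqp ▸ hp)
  rw [initialLetters_succ, hprefix, ← h.2 p (by omega), applySwaps_of_mem s hp]

theorem Transforms.initialLetters_succ_of_notMem (h : Transforms n P s t) (hn : p < n)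
    (hp : p ∉ P) : initialLetters t (p + 1) = initialLetters s (p + 1) :=
  h.initialLetters_eq hn fun _ hq hqp => hp (Nat.succ.inj hqp ▸ hq)

theorem Transforms.mem_of_initialLetters_ne (h : Transforms n P s t) (hn : p < n)
    (hne : initialLetters t (p + 1) ≠ initialLetters s (p + 1)) : p ∈ P :=
  not_imp_comm.1 (h.initialLetters_succ_of_notMem hn) hne

theorem ValidTransform.mem_iff (h : ValidTransform n P s t) :
    p ∈ P ↔ p < n ∧ initialLetters t (p + 1) ≠ initialLetters s (p + 1) := by
  refine ⟨fun hp => ⟨(Nat.lt_succ_self p).trans (h.1.1.1 p hp), ?_⟩,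
    fun hp => h.1.mem_of_initialLetters_ne hp.1 hp.2⟩
  rw [h.1.initialLetters_succ_of_mem hp, initialLetters_succ, ne_eq, Multiset.cons_inj_left]
  exact (h.2 p hp).symm

theorem ValidTransform.unique (hP : ValidTransform n P s t) (hQ : ValidTransform n Q s t) :
    P = Q :=
  Finset.ext fun _ => hP.mem_iff.trans hQ.mem_iff.symm

theorem SwMatching.symm (h : SwMatching n s t) : SwMatching n t s := by
  obtain ⟨P, hP⟩ := h
  have hid : Transforms n ∅ s s := by simp [Transforms, IsSwapSet, applySwaps]
  exact ⟨_, hP.symmDiff hid (by simpa using hP.1)⟩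

theorem ValidTransform.succ_notMem_of_swMatching (hP : ValidTransform n P s t)
    (hQ : ValidTransform n Q s u) (htu : SwMatching n t u) (hp : p ∈ P) : p + 1 ∉ Q := by
  intro hq
  obtain ⟨R, hR⟩ := htu
  have hpQ : p ∉ Q := fun hpQ => hQ.1.1.2 p hpQ hq
  have hqP : p + 1 ∉ P := hP.1.1.2 p hp
  obtain ⟨hpn, hpne⟩ := hP.mem_iff.1 hp
  obtain ⟨hqn, hqne⟩ := hQ.mem_iff.1 hq
  have hpR : p ∈ R := by
    refine hR.mem_of_initialLetters_ne hpn ?_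
    rw [hQ.1.initialLetters_succ_of_notMem hpn hpQ]
    exact hpne.symm
  have hqR : p + 1 ∈ R := by
    refine hR.mem_of_initialLetters_ne hqn ?_
    rwa [hP.1.initialLetters_succ_of_notMem hqn hqP]
  exact hR.1.2 p hpR hqR

theorem ValidTransform.isSwapSet_union (hP : ValidTransform n P s t)
    (hQ : ValidTransform n Q s u) (htu : SwMatching n t u) : IsSwapSet n (P ∪ Q) := by
  simp only [IsSwapSet, Finset.mem_union, not_or]
  refine ⟨fun p hp => hp.elim (hP.1.1.1 p) (hQ.1.1.1 p), fun p hp => ?_⟩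
  rcases hp with hp | hp
  · exact ⟨hP.1.1.2 p hp, hP.succ_notMem_of_swMatching hQ htu hp⟩
  · exact ⟨hQ.succ_notMem_of_swMatching hP htu.symm hp, hQ.1.1.2 p hp⟩

theorem isSwapSet_of_forall_exists_mem {ι : Sort*} {r : ι → ℕ → α} {F : ι → Finset ℕ}
    (hpair : ∀ i j, SwMatching n (r i) (r j)) (hF : ∀ i, ValidTransform n (F i) s (r i))
    (hQ : ∀ p ∈ Q, ∃ i, p ∈ F i) : IsSwapSet n Q := by
  refine ⟨fun p hp => ?_, fun p hp hp' => ?_⟩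
  · obtain ⟨i, hi⟩ := hQ p hp
    exact (hF i).1.1.1 p hi
  · obtain ⟨i, hi⟩ := hQ p hp
    obtain ⟨j, hj⟩ := hQ (p + 1) hp'
    exact (hF i).succ_notMem_of_swMatching (hF j) (hpair i j) hi hj

theorem hamDist_le_of_imp {β γ : Type*} {a b : ℕ → β} {c d : ℕ → γ}
    (h : ∀ i < n, a i ≠ b i → c i ≠ d i) : hamDist n a b ≤ hamDist n c d := by
  refine Finset.card_le_card fun i => ?_
  simp only [Finset.mem_filter, Finset.mem_range]
  exact fun hi => ⟨hi.1, h i hi.1 hi.2⟩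

theorem hamDist_decide_mem (hP : ∀ p ∈ P, p < n) (hQ : ∀ p ∈ Q, p < n) :
    hamDist n (fun p => decide (p ∈ P)) (fun p => decide (p ∈ Q)) = (symmDiff P Q).card := by
  unfold hamDist
  congr 1
  ext p
  simp only [Finset.mem_filter, Finset.mem_range, Finset.mem_symmDiff, ne_eq, decide_eq_decide]
  grind

theorem ValidTransform.swapDist_eq_card (h : ValidTransform n P s t) :
    swapDist n s t = P.card := by
  refine le_antisymm (sInf_le ⟨P, h, rfl⟩) (le_sInf ?_)
  rintro _ ⟨Q, hQ, rfl⟩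
  rw [h.unique hQ]

theorem exists_validTransform_of_swapDist_ne_top (h : swapDist n s t ≠ ⊤) :
    ∃ P, ValidTransform n P s t := by
  contrapose! h
  simp [swapDist, h]

theorem ValidTransform.swapDist_eq_hamDist (hP : ValidTransform n P s t)
    (hQ : ValidTransform n Q s u) (h : IsSwapSet n (P ∪ Q)) :
    swapDist n t u =
      hamDist (n - 1) (fun p => decide (p ∈ P)) (fun p => decide (p ∈ Q)) := by
  rw [(hP.symmDiff hQ h).swapDist_eq_card,
    hamDist_decide_mem (fun p hp => Nat.lt_sub_of_add_lt (hP.1.1.1 p hp))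
      (fun p hp => Nat.lt_sub_of_add_lt (hQ.1.1.1 p hp))]

theorem exists_swapDist_le_hamDist {ι : Sort*} {r : ι → ℕ → α} {F : ι → Finset ℕ}
    (hpair : ∀ i j, SwMatching n (r i) (r j)) (hF : ∀ i, ValidTransform n (F i) s (r i))
    (h : ℕ → Bool) :
    ∃ t : ℕ → α, ∀ i,
      swapDist n (r i) t ≤ hamDist (n - 1) (fun p => decide (p ∈ F i)) h := by
  classical
  let H : Finset ℕ := {p ∈ Finset.range n | h p = true ∧ ∃ i, p ∈ F i}
  have hHF : ∀ p ∈ H, ∃ i, p ∈ F i := fun p hp => (Finset.mem_filter.1 hp).2.2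
  have hH : ValidTransform n H s (applySwaps H s) := by
    refine ⟨⟨isSwapSet_of_forall_exists_mem hpair hF hHF, fun _ _ => rfl⟩, fun p hp => ?_⟩
    obtain ⟨i, hi⟩ := hHF p hp
    exact (hF i).2 p hi
  refine ⟨applySwaps H s, fun i => ?_⟩
  have hFH : IsSwapSet n (F i ∪ H) := isSwapSet_of_forall_exists_mem hpair hF fun p hp =>
    (Finset.mem_union.1 hp).elim (fun hp => ⟨i, hp⟩) (hHF p)
  rw [(hF i).swapDist_eq_hamDist hH hFH, Nat.cast_le]
  refine hamDist_le_of_imp fun p hp => ?_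
  have hpn : p < n := by omega
  have hmem : p ∈ H ↔ h p = true ∧ ∃ j, p ∈ F j := by simp [H, hpn]
  grind

end

theorem sum_swap_iff_sum_hamming_general {ι : Type*} [Fintype ι] {n : ℕ} {s : ι → ℕ → α}
    (hpair : ∀ i j, SwMatching n (s i) (s j)) (i₀ : ι) {P : ι → Finset ℕ}
    (hP : ∀ i, ValidTransform n (P i) (s i₀) (s i)) (D : ℕ) :
    (∃ sstar : ℕ → α, ∑ i, swapDist n (s i) sstar ≤ (D : ℕ∞)) ↔
    (∃ hstar : ℕ → Bool,
      ∑ i, hamDist (n - 1) (fun p => decide (p ∈ P i)) hstar ≤ D) := by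
  constructor
  · rintro ⟨sstar, hsum⟩
    have hfinite : ∀ i, swapDist n (s i) sstar ≠ ⊤ := fun i =>
      ne_top_of_le_ne_top (ENat.natCast_ne_top D)
        ((Finset.single_le_sum_of_canonicallyOrdered (Finset.mem_univ i)).trans hsum)
    choose Q hQ using fun i => exists_validTransform_of_swapDist_ne_top (hfinite i)
    have hdist : ∀ i, swapDist n (s i) sstar =
        hamDist (n - 1) (fun p => decide (p ∈ P i)) (fun p => decide (p ∈ Q i₀)) := fun i =>
      (hP i).swapDist_eq_hamDist (hQ i₀) ((hP i).isSwapSet_union (hQ i₀) ⟨Q i, (hQ i).1⟩)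
    refine ⟨fun p => decide (p ∈ Q i₀), ?_⟩
    simp only [hdist] at hsum
    exact_mod_cast hsum
  · rintro ⟨hstar, hsum⟩
    obtain ⟨sstar, hle⟩ := exists_swapDist_le_hamDist hpair hP hstar
    exact ⟨sstar, (Finset.sum_le_sum fun i _ => hle i).trans (by exact_mod_cast hsum)⟩

/-- Let `S = {s 0, …, s (k-1)}` be pairwise matching strings of length
`n`, with `P i = π(s1, s i)` the valid swap permutation from `s1 = s 0` to `s i` (so the
swap string `h_{s1, s i}` is the indicator string of `P i`; for `i = 0` it is all-zero).
Then there is a length-`n` string `s*` with `∑ i, ∂S(s i, s*) ≤ D` iff there is a binary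
string `h*` of length `n-1` with `∑ i, ∂Ham(h_{s1,s i}, h*) ≤ D`. -/
theorem sum_swap_iff_sum_hamming {α : Type u} (n k : ℕ) (hk : 0 < k)
    (s : Fin k → ℕ → α)
    (hpair : ∀ i j, SwMatching n (s i) (s j))
    (D : ℕ) (P : Fin k → Finset ℕ)
    (hP : ∀ i, ValidTransform n (P i) (s ⟨0, hk⟩) (s i)) :
    (∃ sstar : ℕ → α, ∑ i, swapDist n (s i) sstar ≤ (D : ℕ∞)) ↔
    (∃ hstar : ℕ → Bool,
      ∑ i, hamDist (n - 1) (fun p => decide (p ∈ P i)) hstar ≤ D) :=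
  sum_swap_iff_sum_hamming_general hpair ⟨0, hk⟩ hP D
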